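/- Let Γ ⊆ ℝⁿ be an open convex cone containing the positive cone Γ₊, and let F be continuous on the closure of Γ, positive on Γ, vanishing on ∂Γ, concave and positively homogeneous of degree 1 on Γ, with H(κ) = Σᵢκᵢ > 0 on Γ. Then for every fixed ε > 0 and all constants δ > 0 and κ̄ > 0, the set Λ̃_{δ,κ̄} = {κ ∈ Γ_ε : δ ≤ F_ε(κ) and κᵢ ≤ κ̄ for all i} is a compact subset of Γ_ε. -/

import Mathlib

/-!
Two facts combine. A superlevel set `{x ∈ Γ | δ ≤ F x}` that `F < δ` keeps away from `∂Γ` is closed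
in the whole space, as in it `Γ` may be replaced by `closure Γ`. A set of vectors whose coordinates
are bounded above and whose coordinate sum is bounded below is bounded. The map `φ_ε` multiplies `H`
by `1 + nε > 0`, so a lower bound of `H` on `Γ` gives one on `Γ_ε`.
-/

noncomputable section

/-- `H κ = Σᵢ κᵢ`. -/
def Hsum {n : ℕ} (κ : Fin n → ℝ) : ℝ := ∑ i, κ i

/-- `φ_ε(κ) = (κᵢ + εH(κ))ᵢ`, so that `F_ε = F ∘ φ_ε` on `Γ_ε = φ_ε⁻¹(Γ)`. -/
def phi (ε : ℝ) {n : ℕ} (κ : Fin n → ℝ) : Fin n → ℝ := fun i => κ i + ε * Hsum κ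

section Topology

variable {X α : Type*} [TopologicalSpace X] [TopologicalSpace α] [Preorder α] [ClosedIciTopology α]

theorem isClosed_setOf_mem_and_le_of_lt_on_frontier {s : Set X} {f : X → α} {a : α}
    (hf : ContinuousOn f (closure s)) (hlt : ∀ x ∈ frontier s, f x < a) :
    IsClosed {x | x ∈ s ∧ a ≤ f x} := by
  have closure_form : {x | x ∈ s ∧ a ≤ f x} = closure s ∩ f ⁻¹' Set.Ici a := by
    ext x
    refine and_congr_left fun hax => ⟨(subset_closure ·), fun hx => ?_⟩
    rw [closure_eq_self_union_frontier] at hx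
    exact hx.resolve_right fun hfr => (hlt x hfr).not_ge hax
  rw [closure_form]
  exact hf.preimage_isClosed_of_isClosed isClosed_closure isClosed_Ici

end Topology

section UpperBoundedCoordinates

variable {ι α : Type*} [Fintype ι] [AddCommGroup α] [PartialOrder α] [IsOrderedAddMonoid α]

theorem sub_sum_sub_le_of_le {x b : ι → α} (hx : x ≤ b) (i : ι) :
    b i - (∑ j, b j - ∑ j, x j) ≤ x i := by
  rw [sub_le_comm, ← Finset.sum_sub_distrib]
  exact Finset.single_le_sum (f := fun j => b j - x j) (fun j _ => sub_nonneg.2 (hx j))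
    (Finset.mem_univ i)

theorem isCompact_setOf_le_and_le_sum [TopologicalSpace α] [OrderClosedTopology α]
    [ContinuousAdd α] [CompactIccSpace α] (b : ι → α) (m : α) :
    IsCompact {x : ι → α | x ≤ b ∧ m ≤ ∑ i, x i} := by
  have hclosed : IsClosed {x : ι → α | x ≤ b ∧ m ≤ ∑ i, x i} :=
    isClosed_Iic.inter (isClosed_le continuous_const (by fun_prop))
  refine (isCompact_Icc (a := fun i => b i - (∑ j, b j - m)) (b := b)).of_isClosed_subset hclosed ?_
  rintro x ⟨hxb, hmx⟩
  refine ⟨fun i => ?_, hxb⟩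
  calc b i - (∑ j, b j - m) ≤ b i - (∑ j, b j - ∑ j, x j) := by gcongr
    _ ≤ x i := sub_sum_sub_le_of_le hxb i

end UpperBoundedCoordinates

section EllipticRegularization

variable {n : ℕ} {ε : ℝ}

theorem continuous_phi : Continuous (phi ε : (Fin n → ℝ) → Fin n → ℝ) := by
  unfold phi Hsum
  fun_prop

theorem Hsum_phi (κ : Fin n → ℝ) : Hsum (phi ε κ) = (1 + n * ε) * Hsum κ := by
  calc Hsum (phi ε κ) = Hsum κ + n * (ε * Hsum κ) := by
        simp [Hsum, phi, Finset.sum_add_distrib]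
    _ = (1 + n * ε) * Hsum κ := by ring

theorem stmt9_general {Γ : Set (Fin n → ℝ)} {F : (Fin n → ℝ) → ℝ} {δ : ℝ}
    (hF : ContinuousOn F (closure Γ)) (hFδ : ∀ κ ∈ frontier Γ, F κ < δ)
    (hH : BddBelow (Hsum '' Γ)) (hε : 0 < 1 + n * ε) (b : Fin n → ℝ) :
    IsCompact {κ : Fin n → ℝ | phi ε κ ∈ Γ ∧ δ ≤ F (phi ε κ) ∧ κ ≤ b} := by
  obtain ⟨m, hm⟩ := hH
  have hclosed : IsClosed {κ | phi ε κ ∈ Γ ∧ δ ≤ F (phi ε κ)} :=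
    (isClosed_setOf_mem_and_le_of_lt_on_frontier hF hFδ).preimage continuous_phi
  have hcompact : IsCompact {κ : Fin n → ℝ | κ ≤ b ∧ m / (1 + n * ε) ≤ Hsum κ} :=
    isCompact_setOf_le_and_le_sum b _
  have hclosed_le : IsClosed {κ | phi ε κ ∈ Γ ∧ δ ≤ F (phi ε κ) ∧ κ ≤ b} := by
    simpa only [Set.ofPred_and, Set.inter_assoc, Set.Iic]
      using hclosed.inter (isClosed_Iic (a := b))
  refine hcompact.of_isClosed_subset hclosed_le ?_
  rintro κ ⟨hκΓ, -, hκb⟩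
  have hmκ : m ≤ (1 + n * ε) * Hsum κ := Hsum_phi κ ▸ hm (Set.mem_image_of_mem Hsum hκΓ)
  exact ⟨hκb, (div_le_iff₀' hε).2 hmκ⟩

end EllipticRegularization

/-- let `Γ ⊇ Γ₊` be an open convex cone and let `F` be continuous on
`closure Γ`, positive on `Γ`, vanishing on `∂Γ`, concave and positively homogeneous of
degree 1 on `Γ`, with `H > 0` on `Γ`.  Then for each fixed `ε > 0` and all `δ > 0`,
`κ̄ > 0`, the set `Λ̃_{δ,κ̄} = {κ ∈ Γ_ε : δ ≤ F_ε(κ), κᵢ ≤ κ̄ ∀i}` is a compact subset of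
`Γ_ε`. -/
theorem stmt9 {n : ℕ} (Γ : Set (Fin n → ℝ)) (hopen : IsOpen Γ) (hconv : Convex ℝ Γ)
    (hcone : ∀ κ ∈ Γ, ∀ t : ℝ, 0 < t → t • κ ∈ Γ)
    (hpos : {κ : Fin n → ℝ | ∀ i, 0 < κ i} ⊆ Γ)
    (F : (Fin n → ℝ) → ℝ)
    (hFc : ContinuousOn F (closure Γ))
    (hFpos : ∀ κ ∈ Γ, 0 < F κ)
    (hFzero : ∀ κ ∈ frontier Γ, F κ = 0)
    (hFconc : ConcaveOn ℝ Γ F)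
    (hFhom : ∀ κ ∈ Γ, ∀ t : ℝ, 0 < t → F (t • κ) = t * F κ)
    (hH : ∀ κ ∈ Γ, 0 < Hsum κ)
    (ε : ℝ) (hε : 0 < ε) (δ : ℝ) (hδ : 0 < δ) (κbar : ℝ) (hκbar : 0 < κbar) :
    IsCompact {κ : Fin n → ℝ | phi ε κ ∈ Γ ∧ δ ≤ F (phi ε κ) ∧ ∀ i, κ i ≤ κbar} ∧
    {κ : Fin n → ℝ | phi ε κ ∈ Γ ∧ δ ≤ F (phi ε κ) ∧ ∀ i, κ i ≤ κbar}
      ⊆ {κ : Fin n → ℝ | phi ε κ ∈ Γ} := by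
  have hHbdd : BddBelow (Hsum '' Γ) := ⟨0, Set.forall_mem_image.2 fun κ hκ => (hH κ hκ).le⟩
  exact ⟨stmt9_general hFc (fun κ hκ => (hFzero κ hκ).trans_lt hδ) hHbdd (by positivity)
    fun _ => κbar, fun _ hκ => hκ.1⟩
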